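/- arXiv:1111.3107 — 3 statements merged into one kernel-verified Lean document; each statement's English description precedes it below -/
import Mathlib

section
/- Let ℬ = (Q, q₀, Δ, F) be a set-labeled Büchi automaton over A. Then: (i) for all states p, q ∈ Q, the languages U_{pq} = {u ∈ List A | there is a run of ℬ from p to q on u} and U'_{pq} = {u ∈ List A | there is a run of ℬ from p to q on u that visits a state of F} are recognizable over A; (ii) every equivalence class of the relation ∼_ℬ (equality of transition profiles) is recognizable over A; (iii) ∼_ℬ has only finitely many equivalence classes, in fact at most 2^(2·|Q|²) many. -/
/-!
The transition profile of a word is computed letter by letter: a run on `u ++ [a]` is a run on `u`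
followed by one step on `a`, so `tp (u ++ [a])` depends only on `tp u` and `a`
(`SLA.tp_append_singleton`). There are finitely many profiles, so they form the states of a
deterministic set-labeled automaton whose edge from `s` to `t` carries the set of letters moving `s`
to `t`; it reaches exactly the state `tp u` on reading `u`. Hence every language of the form
`{u | tp u ∈ T}` is recognizable (`recognizable_preimage`). The languages `U_{pq}`, `U'_{pq}` and the
equivalence classes are all of this form, and the bound on the number of classes is the number of
pairs of subsets of `Q × Q`.
-/


universe u

/-- A set-labeled automaton over a (possibly infinite) alphabet `A`:
finitely many states, an initial state, a finite list of transitions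
labeled by sets of letters, and a set of accepting states. -/
structure SLA (A : Type u) where
  Q : Type
  fin : Finite Q
  q0 : Q
  Δ : List (Q × Set A × Q)
  F : Set Q

namespace SLA

variable {A : Type u}

/-- `ρ` respects the transitions of `M` along the finite word `u`. -/
def FinRunOn (M : SLA A) (u : List A) (ρ : ℕ → M.Q) : Prop :=
  ∀ i, (h : i < u.length) → ∃ φ, (ρ i, φ, ρ (i + 1)) ∈ M.Δ ∧ u.get ⟨i, h⟩ ∈ φ

/-- There is a run of `M` from `p` to `q` on the finite word `u`. -/
def FinRun (M : SLA A) (p q : M.Q) (u : List A) : Prop :=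
  ∃ ρ : ℕ → M.Q, ρ 0 = p ∧ ρ u.length = q ∧ M.FinRunOn u ρ

/-- There is a run of `M` from `p` to `q` on `u` that visits an accepting state. -/
def FinRunVisit (M : SLA A) (p q : M.Q) (u : List A) : Prop :=
  ∃ ρ : ℕ → M.Q, ρ 0 = p ∧ ρ u.length = q ∧ (∃ i, i ≤ u.length ∧ ρ i ∈ M.F) ∧
    M.FinRunOn u ρ

/-- The language of finite words accepted by `M`. -/
def lang (M : SLA A) : Set (List A) := {u | ∃ q ∈ M.F, M.FinRun M.q0 q u}

/-- A run of `M` (viewed as a Büchi automaton) on the ω-word `α`. -/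
def InfRun (M : SLA A) (α : ℕ → A) (ρ : ℕ → M.Q) : Prop :=
  ρ 0 = M.q0 ∧ ∀ i, ∃ φ, (ρ i, φ, ρ (i + 1)) ∈ M.Δ ∧ α i ∈ φ

/-- The ω-language accepted by `M` with the Büchi condition. -/
def buchiLang (M : SLA A) : Set (ℕ → A) :=
  {α | ∃ ρ, M.InfRun α ρ ∧ ∀ n, ∃ m, n ≤ m ∧ ρ m ∈ M.F}

/-- The transition profile of a finite word `u`. -/
def tp (M : SLA A) (u : List A) : Set (M.Q × M.Q) × Set (M.Q × M.Q) :=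
  ({pq | M.FinRun pq.1 pq.2 u}, {pq | M.FinRunVisit pq.1 pq.2 u})

end SLA

/-- A language of finite words is recognizable over `A` by a set-labeled automaton. -/
def Recognizable (A : Type u) (U : Set (List A)) : Prop :=
  ∃ M : SLA A, M.lang = U

/-- An ω-language is Büchi-recognizable over `A` by a set-labeled Büchi automaton. -/
def BuchiRecognizable (A : Type u) (L : Set (ℕ → A)) : Prop :=
  ∃ M : SLA A, M.buchiLang = L

/-- The finite word `α(i) α(i+1) ⋯ α(j−1)` (segment with exclusive right end). -/
def extract {A : Type u} (α : ℕ → A) (i j : ℕ) : List A :=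
  (List.range (j - i)).map fun k => α (i + k)

/-- ω-iteration `U^ω` of a language `U` of finite words. -/
def omegaIter {A : Type u} (U : Set (List A)) : Set (ℕ → A) :=
  {α | ∃ ι : ℕ → ℕ, ι 0 = 0 ∧ StrictMono ι ∧ ∀ j, extract α (ι j) (ι (j + 1)) ∈ U}

/-- Concatenation `U · K` of a language of finite words with an ω-language. -/
def cat {A : Type u} (U : Set (List A)) (K : Set (ℕ → A)) : Set (ℕ → A) :=
  {α | ∃ r, extract α 0 r ∈ U ∧ (fun n => α (n + r)) ∈ K}

namespace SLA

variable {A : Type u}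

/-- `M` can move from `r` to `q` on the letter `a`. -/
def Step (M : SLA A) (r : M.Q) (a : A) (q : M.Q) : Prop :=
  ∃ φ, (r, φ, q) ∈ M.Δ ∧ a ∈ φ

lemma finRun_nil (M : SLA A) (p q : M.Q) : M.FinRun p q [] ↔ p = q := by
  constructor
  · rintro ⟨ρ, h0, h1, -⟩
    exact h0.symm.trans h1
  · rintro rfl
    exact ⟨fun _ => p, rfl, rfl, fun i h => absurd h (Nat.not_lt_zero i)⟩

lemma finRunOn_append_singleton (M : SLA A) (u : List A) (a : A) (ρ : ℕ → M.Q) :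
    M.FinRunOn (u ++ [a]) ρ ↔
      M.FinRunOn u ρ ∧ M.Step (ρ u.length) a (ρ (u.length + 1)) := by
  constructor
  · intro h
    refine ⟨fun i hi => ?_, ?_⟩
    · obtain ⟨φ, h1, h2⟩ := h i (by simp; omega)
      exact ⟨φ, h1, by simpa [List.getElem_append_left hi] using h2⟩
    · obtain ⟨φ, h1, h2⟩ := h u.length (by simp)
      exact ⟨φ, h1, by simpa using h2⟩
  · rintro ⟨h, φ, h1, h2⟩ i hi
    rcases Nat.lt_or_ge i u.length with hlt | hge
    · obtain ⟨ψ, h3, h4⟩ := h i hlt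
      exact ⟨ψ, h3, by simpa [List.getElem_append_left hlt] using h4⟩
    · obtain rfl : i = u.length := by simp at hi; omega
      exact ⟨φ, h1, by simpa using h2⟩

/-- A run on `u` followed by a step on `a` is a run on `u ++ [a]`; the extended run is `ρ` up to
position `u.length` and `q` afterwards. -/
lemma finRunOn_extend (M : SLA A) {u : List A} {a : A} {ρ : ℕ → M.Q} {q : M.Q}
    (h : M.FinRunOn u ρ) (hs : M.Step (ρ u.length) a q) :
    M.FinRunOn (u ++ [a]) (fun i => if i ≤ u.length then ρ i else q) := by
  rw [finRunOn_append_singleton]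
  refine ⟨fun i hi => ?_, by simpa using hs⟩
  have h1 : i ≤ u.length := hi.le
  have h2 : i + 1 ≤ u.length := hi
  simpa only [h1, h2, if_true] using h i hi

lemma finRun_append_singleton (M : SLA A) (p q : M.Q) (u : List A) (a : A) :
    M.FinRun p q (u ++ [a]) ↔ ∃ r, M.FinRun p r u ∧ M.Step r a q := by
  constructor
  · rintro ⟨ρ, h0, h1, h⟩
    rw [finRunOn_append_singleton] at h
    simp only [List.length_append, List.length_singleton] at h1
    exact ⟨ρ u.length, ⟨ρ, h0, rfl, h.1⟩, h1 ▸ h.2⟩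
  · rintro ⟨r, ⟨ρ, h0, rfl, h⟩, hs⟩
    exact ⟨_, by simpa using h0, by simp, M.finRunOn_extend h hs⟩

/-- A run on `u ++ [a]` visits `F` either while reading `u` or at its last state. -/
lemma finRunVisit_append_singleton (M : SLA A) (p q : M.Q) (u : List A) (a : A) :
    M.FinRunVisit p q (u ++ [a]) ↔
      ∃ r, (M.FinRunVisit p r u ∨ M.FinRun p r u ∧ q ∈ M.F) ∧ M.Step r a q := by
  constructor
  · rintro ⟨ρ, h0, h1, ⟨i, hi, hF⟩, h⟩
    rw [finRunOn_append_singleton] at h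
    simp only [List.length_append, List.length_singleton] at h1 hi
    refine ⟨ρ u.length, ?_, h1 ▸ h.2⟩
    rcases Nat.lt_or_ge u.length i with hlt | hge
    · obtain rfl : i = u.length + 1 := by omega
      exact Or.inr ⟨⟨ρ, h0, rfl, h.1⟩, h1 ▸ hF⟩
    · exact Or.inl ⟨ρ, h0, rfl, ⟨i, hge, hF⟩, h.1⟩
  · rintro ⟨r, ⟨ρ, h0, rfl, ⟨i, hi, hF⟩, h⟩ | ⟨⟨ρ, h0, rfl, h⟩, hF⟩, hs⟩
    · exact ⟨_, by simpa using h0, by simp, ⟨i, by simp; omega, by simpa [hi] using hF⟩,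
        M.finRunOn_extend h hs⟩
    · exact ⟨_, by simpa using h0, by simp, ⟨u.length + 1, by simp, by simpa using hF⟩,
        M.finRunOn_extend h hs⟩

/-- The action of a letter on transition profiles by appending it on the right. -/
def tpStep (M : SLA A) (s : Set (M.Q × M.Q) × Set (M.Q × M.Q)) (a : A) :
    Set (M.Q × M.Q) × Set (M.Q × M.Q) :=
  ({pq | ∃ r, (pq.1, r) ∈ s.1 ∧ M.Step r a pq.2},
   {pq | ∃ r, ((pq.1, r) ∈ s.2 ∨ (pq.1, r) ∈ s.1 ∧ pq.2 ∈ M.F) ∧ M.Step r a pq.2})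

lemma tp_append_singleton (M : SLA A) (u : List A) (a : A) :
    M.tp (u ++ [a]) = M.tpStep (M.tp u) a := by
  refine Prod.ext ?_ ?_
  · ext ⟨p, q⟩
    exact M.finRun_append_singleton p q u a
  · ext ⟨p, q⟩
    exact M.finRunVisit_append_singleton p q u a

end SLA

/-- A finite-state invariant `f` of words that is updated letter by letter can be computed by a
deterministic set-labeled automaton, so every preimage under `f` is recognizable. -/
lemma recognizable_preimage {A : Type u} {S : Type} [Finite S] (f : List A → S)
    (δ : S → A → S) (hf : ∀ u a, f (u ++ [a]) = δ (f u) a) (T : Set S) :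
    Recognizable A {u | f u ∈ T} := by
  classical
  have := Fintype.ofFinite S
  -- One edge for each pair of states, labeled by the (possibly infinite) set of letters
  -- inducing that move.
  let N : SLA A :=
    { Q := S
      fin := inferInstance
      q0 := f []
      Δ := (Finset.univ : Finset (S × S)).toList.map fun st => (st.1, {a | δ st.1 a = st.2}, st.2)
      F := T }
  have hstep : ∀ (s : S) (a : A) (t : S), N.Step s a t ↔ δ s a = t := by
    intro s a t
    constructor
    · rintro ⟨φ, h1, h2⟩
      obtain ⟨⟨s', t'⟩, -, h⟩ := List.mem_map.1 h1
      simp only [Prod.mk.injEq] at h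
      obtain ⟨rfl, rfl, rfl⟩ := h
      exact h2
    · intro h
      exact ⟨{a | δ s a = t}, List.mem_map.2 ⟨(s, t), by simp, rfl⟩, h⟩
  have hrun : ∀ (u : List A) (t : S), N.FinRun (f []) t u ↔ f u = t := by
    intro u
    induction u using List.reverseRecOn with
    | nil => exact fun t => N.finRun_nil (f []) t
    | append_singleton u a ih =>
      intro t
      rw [N.finRun_append_singleton, hf]
      constructor
      · rintro ⟨r, h1, h2⟩
        rw [(ih r).1 h1]
        exact (hstep r a t).1 h2
      · intro h
        exact ⟨f u, (ih _).2 rfl, (hstep _ a t).2 h⟩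
  refine ⟨N, ?_⟩
  ext u
  constructor
  · rintro ⟨t, ht, h⟩
    obtain rfl := (hrun u t).1 h
    exact ht
  · intro h
    exact ⟨f u, h, (hrun u _).2 rfl⟩

/-- (i) for all states `p, q`, the languages `U_{pq}` and `U'_{pq}` are
recognizable; (ii) every `∼_ℬ`-equivalence class (class of words with a given
transition profile) is recognizable; (iii) `∼_ℬ` has finitely many classes, in fact
at most `2 ^ (2 · |Q|²)` many. -/
theorem transition_profiles {A : Type u} (M : SLA A) :
    (∀ p q : M.Q,
        Recognizable A {u | M.FinRun p q u} ∧ Recognizable A {u | M.FinRunVisit p q u}) ∧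
      (∀ v : List A, Recognizable A {u | M.tp u = M.tp v}) ∧
      (Set.range M.tp).Finite ∧
      Nat.card (Set.range M.tp) ≤ 2 ^ (2 * Nat.card M.Q ^ 2) := by
  have : Finite M.Q := M.fin
  have key := recognizable_preimage M.tp M.tpStep M.tp_append_singleton
  refine ⟨fun p q => ⟨key {s | (p, q) ∈ s.1}, key {s | (p, q) ∈ s.2}⟩,
    fun v => key {M.tp v}, Set.toFinite _, ?_⟩
  have hset : Nat.card (Set (M.Q × M.Q)) = 2 ^ (Nat.card M.Q ^ 2) := by
    rw [show Nat.card (Set (M.Q × M.Q)) = Nat.card (M.Q × M.Q → Prop) from rfl,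
      Nat.card_fun, Nat.card_prod, sq, Nat.card_eq_fintype_card (α := Prop), Fintype.card_prop]
  calc Nat.card (Set.range M.tp)
      ≤ Nat.card (Set (M.Q × M.Q) × Set (M.Q × M.Q)) :=
        Nat.card_le_card_of_injective _ Subtype.val_injective
    _ = 2 ^ (2 * Nat.card M.Q ^ 2) := by
        rw [Nat.card_prod, hset, ← pow_add, two_mul]
end

section
/- Let ℬ be a set-labeled Büchi automaton over A. Then the complement of L(ℬ) is the union, over all pairs of transition profiles (τ₀, τ) such that U_{τ₀} · (U_τ)^ω ∩ L(ℬ) = ∅, of the sets U_{τ₀} · (U_τ)^ω; that is, {α : ℕ → A | α ∉ L(ℬ)} = ⋃ {U_{τ₀} · (U_τ)^ω | τ₀, τ profiles of ℬ with U_{τ₀} · (U_τ)^ω ∩ L(ℬ) = ∅}. -/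
/-!
Two facts give the theorem.

*Saturation.* If `α ∈ L(M)` and `β` lies in the same set `U_{τ₀} · (U_τ)^ω` as `α`, then `β ∈ L(M)`.
Cut `α` and `β` into blocks with pairwise equal profiles. A successful run on `α` restricts to runs
on its blocks; since profiles agree, each can be replaced by a run on the corresponding block of `β`
with the same end states, visiting `F` whenever the original does. These runs glue to a successful
run on `β` (`exists_glue`, `mem_buchiLang_of_blocks`). Hence each `U_{τ₀} · (U_τ)^ω` is either
disjoint from `L(M)` or contained in it.

*Covering.* Every ω-word lies in some `U_{τ₀} · (U_τ)^ω` (`exists_mem_cat`). This is a weak form of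
the infinite Ramsey theorem for the finite colouring `(i, j) ↦ tp (α(i)⋯α(j-1))`: only
consecutive cut points have to receive the same colour (`exists_chain`).
-/

universe u

theorem length_extract {A : Type u} (α : ℕ → A) (i j : ℕ) : (extract α i j).length = j - i := by
  simp [extract]

theorem extract_shift {A : Type u} (α : ℕ → A) (r i j : ℕ) :
    extract (fun n => α (n + r)) i j = extract α (r + i) (r + j) := by
  unfold extract
  rw [Nat.add_sub_add_left]
  refine congrArg (fun f => List.map f (List.range (j - i))) (funext fun k => ?_)
  exact congrArg α (by omega)

theorem finRunOn_extract {A : Type u} (M : SLA A) (α : ℕ → A) (i j : ℕ) (ρ : ℕ → M.Q) :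
    M.FinRunOn (extract α i j) ρ ↔
      ∀ k, k < j - i → ∃ φ, (ρ k, φ, ρ (k + 1)) ∈ M.Δ ∧ α (i + k) ∈ φ := by
  simp [SLA.FinRunOn, extract]

/-- For a finite colouring of pairs of naturals there is an infinite sequence whose consecutive
terms all receive the same colour. For a nonprincipal ultrafilter, each `i` has a colour
`c i` taken by almost all pairs `(i, j)`, and almost all `i` share one value `c₀` of `c`; from any
such `i` one can always move on to a larger such `j` with `(i, j)` coloured `c₀`. -/
theorem exists_chain {C : Type*} [Finite C] (col : ℕ → ℕ → C) :
    ∃ (c₀ : C) (s : ℕ → ℕ), StrictMono s ∧ ∀ j, col (s j) (s (j + 1)) = c₀ := by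
  have key : ∀ g : ℕ → C, ∃ c, ∀ᶠ i in (Filter.hyperfilter ℕ : Filter ℕ), g i = c := by
    intro g
    obtain ⟨c, hc⟩ := Ultrafilter.eq_pure_of_finite ((Filter.hyperfilter ℕ).map g)
    refine ⟨c, ?_⟩
    have : ({c} : Set C) ∈ (Filter.hyperfilter ℕ).map g := by
      rw [hc]; exact Filter.mem_pure.2 rfl
    exact this
  choose c hc using fun i => key (col i)
  obtain ⟨c₀, hc₀⟩ := key c
  have step : ∀ i : {i // c i = c₀}, ∃ j : {i // c i = c₀}, i.1 < j.1 ∧ col i.1 j.1 = c₀ := by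
    rintro ⟨i, hi⟩
    have hgt : ∀ᶠ j in (Filter.hyperfilter ℕ : Filter ℕ), i < j :=
      Nat.hyperfilter_le_atTop (Filter.eventually_gt_atTop i)
    obtain ⟨j, h1, h2, h3⟩ := ((hc i).and (hc₀.and hgt)).exists
    exact ⟨⟨j, h2⟩, h3, h1.trans hi⟩
  choose f hf using step
  obtain ⟨i₀, hi₀⟩ := hc₀.exists
  refine ⟨c₀, fun n => (f^[n] ⟨i₀, hi₀⟩).1, strictMono_nat_of_lt_succ fun n => ?_, fun n => ?_⟩
  · simp only [Function.iterate_succ_apply']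
    exact (hf _).1
  · simp only [Function.iterate_succ_apply']
    exact (hf _).2

theorem exists_mem_cat {A : Type u} (M : SLA A) (α : ℕ → A) :
    ∃ τ₀ τ, α ∈ cat {u | M.tp u = τ₀} (omegaIter {u | M.tp u = τ}) := by
  have := M.fin
  obtain ⟨τ, s, hs, hcol⟩ := exists_chain fun i j => M.tp (extract α i j)
  have hle : ∀ j, s 0 ≤ s j := fun j => hs.monotone (Nat.zero_le j)
  refine ⟨_, τ, s 0, rfl, fun j => s j - s 0, Nat.sub_self _, fun i j hij => ?_, fun j => ?_⟩
  · have h1 := hs hij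
    have h2 := hle i
    change s i - s 0 < s j - s 0
    omega
  · change M.tp _ = τ
    rw [extract_shift, Nat.add_sub_cancel' (hle j), Nat.add_sub_cancel' (hle (j + 1))]
    exact hcol j

/-- Cut points `a` of a member of `U_{τ₀} · (U_τ)^ω`: block `0` has profile `τ₀` and may be empty
(so that `a` need not be strictly monotone), all later blocks have profile `τ`. -/
theorem exists_cuts {A : Type u} (M : SLA A) (α : ℕ → A)
    (τ₀ τ : Set (M.Q × M.Q) × Set (M.Q × M.Q))
    (h : α ∈ cat {u | M.tp u = τ₀} (omegaIter {u | M.tp u = τ})) :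
    ∃ a : ℕ → ℕ, a 0 = 0 ∧ Monotone a ∧ (∀ n, ∃ j, n < a j) ∧
      ∀ j, M.tp (extract α (a j) (a (j + 1))) = if j = 0 then τ₀ else τ := by
  obtain ⟨r, h0, ι, hι0, hι, hι'⟩ := h
  refine ⟨fun j => Nat.casesOn j 0 fun k => r + ι k, rfl, monotone_nat_of_le_succ ?_, ?_, ?_⟩
  · rintro (_ | j)
    · exact Nat.zero_le _
    · exact Nat.add_le_add_left (hι.monotone (Nat.le_succ j)) r
  · intro n
    refine ⟨n + 2, ?_⟩
    have := hι.id_le (n + 1)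
    simp only [id] at this
    change n < r + ι (n + 1)
    omega
  · rintro (_ | j)
    · simpa [hι0] using h0
    · have := hι' j
      rw [extract_shift] at this
      simpa using this

theorem exists_block (a : ℕ → ℕ) (h0 : a 0 = 0) (hunb : ∀ n, ∃ j, n < a j) (n : ℕ) :
    ∃ j, a j ≤ n ∧ n < a (j + 1) := by
  classical
  have hpos : Nat.find (hunb n) ≠ 0 := fun h => by
    have := Nat.find_spec (hunb n)
    rw [h, h0] at this
    omega
  obtain ⟨j, hj⟩ := Nat.exists_eq_succ_of_ne_zero hpos
  refine ⟨j, not_lt.1 (Nat.find_min (hunb n) (by omega)), ?_⟩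
  have := Nat.find_spec (hunb n)
  rwa [hj] at this

/-- Sequences `σ j` on the blocks `[b j, b (j+1)]`, agreeing at the cut points, glue to a single
sequence. Blocks may be empty. -/
theorem exists_glue {Q : Type*} (b : ℕ → ℕ) (h0 : b 0 = 0) (hb : Monotone b)
    (hunb : ∀ n, ∃ j, n < b j) (p : ℕ → Q) (σ : ℕ → ℕ → Q) (hσ0 : ∀ j, σ j 0 = p j)
    (hσ1 : ∀ j, σ j (b (j + 1) - b j) = p (j + 1)) :
    ∃ ρ : ℕ → Q, ∀ j k, k ≤ b (j + 1) - b j → ρ (b j + k) = σ j k := by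
  choose d hd1 hd2 using exists_block b h0 hunb
  have hp : ∀ j m, j ≤ m → b j = b m → p j = p m := by
    intro j m hjm
    induction m, hjm using Nat.le_induction with
    | base => intro _; rfl
    | succ m hm ih =>
      intro h
      have h1 := hb hm
      have h2 : b m ≤ b (m + 1) := hb (Nat.le_succ m)
      rw [ih (by omega), ← hσ1 m, ← hσ0 m]
      congr 1
      omega
  -- At a cut point the block selected by `d` may come after several empty blocks.
  have hcut : ∀ j, σ (d (b j)) (b j - b (d (b j))) = p j := by
    intro j
    have hj : j ≤ d (b j) := by
      by_contra hlt
      have := hb (show d (b j) + 1 ≤ j by omega)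
      have := hd2 (b j)
      omega
    have h1 := hb hj
    have h2 := hd1 (b j)
    rw [hp j _ hj (by omega), ← hσ0]
    congr 1
    omega
  refine ⟨fun n => σ (d n) (n - b (d n)), fun j k hk => ?_⟩
  have hle : b j ≤ b (j + 1) := hb (Nat.le_succ j)
  rcases hk.lt_or_eq with hlt | rfl
  · have hdj : d (b j + k) = j := by
      have h1 := hd1 (b j + k)
      have h2 := hd2 (b j + k)
      apply le_antisymm
      · by_contra h
        have := hb (show j + 1 ≤ d (b j + k) by omega)
        omega
      · by_contra h
        have := hb (show d (b j + k) + 1 ≤ j by omega)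
        omega
    simp only [hdj, Nat.add_sub_cancel_left]
  · rw [Nat.add_sub_cancel' hle, hσ1]
    exact hcut (j + 1)

/-- Acceptance depends only on the sequence of profiles of the blocks of an ω-word. -/
theorem mem_buchiLang_of_blocks {A : Type u} (M : SLA A) (α β : ℕ → A) (a b : ℕ → ℕ)
    (ha0 : a 0 = 0) (ha : Monotone a) (haunb : ∀ n, ∃ j, n < a j)
    (hb0 : b 0 = 0) (hb : Monotone b) (hbunb : ∀ n, ∃ j, n < b j)
    (htp : ∀ j, M.tp (extract α (a j) (a (j + 1))) = M.tp (extract β (b j) (b (j + 1))))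
    (hα : α ∈ M.buchiLang) : β ∈ M.buchiLang := by
  obtain ⟨ρ, ⟨hρ0, hρ⟩, hacc⟩ := hα
  have hlea : ∀ j, a j + (a (j + 1) - a j) = a (j + 1) :=
    fun j => Nat.add_sub_cancel' (ha (Nat.le_succ j))
  have hrunα : ∀ j, M.FinRunOn (extract α (a j) (a (j + 1))) fun k => ρ (a j + k) := by
    intro j
    rw [finRunOn_extract]
    exact fun k _ => hρ (a j + k)
  have hrun : ∀ j, M.FinRun (ρ (a j)) (ρ (a (j + 1))) (extract β (b j) (b (j + 1))) := by
    intro j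
    have h : (ρ (a j), ρ (a (j + 1))) ∈ (M.tp (extract α (a j) (a (j + 1)))).1 :=
      ⟨fun k => ρ (a j + k), rfl, by simp only [length_extract, hlea], hrunα j⟩
    rw [htp] at h
    exact h
  have hvisit : ∀ j m, a j ≤ m → m < a (j + 1) → ρ m ∈ M.F →
      M.FinRunVisit (ρ (a j)) (ρ (a (j + 1))) (extract β (b j) (b (j + 1))) := by
    intro j m h1 h2 hm
    have h : (ρ (a j), ρ (a (j + 1))) ∈ (M.tp (extract α (a j) (a (j + 1)))).2 := by
      refine ⟨fun k => ρ (a j + k), rfl, by simp only [length_extract, hlea],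
        ⟨m - a j, ?_, ?_⟩, hrunα j⟩
      · rw [length_extract]; omega
      · simpa only [Nat.add_sub_cancel' h1] using hm
    rw [htp] at h
    exact h
  have hσ : ∀ j, ∃ σ : ℕ → M.Q, σ 0 = ρ (a j) ∧ σ (b (j + 1) - b j) = ρ (a (j + 1)) ∧
      M.FinRunOn (extract β (b j) (b (j + 1))) σ ∧
      (∀ m, a j ≤ m → m < a (j + 1) → ρ m ∈ M.F → ∃ i, i ≤ b (j + 1) - b j ∧ σ i ∈ M.F) := by
    intro j
    by_cases hv : M.FinRunVisit (ρ (a j)) (ρ (a (j + 1))) (extract β (b j) (b (j + 1)))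
    · obtain ⟨σ, h0, h1, h2, h3⟩ := hv
      rw [length_extract] at h1 h2
      exact ⟨σ, h0, h1, h3, fun _ _ _ _ => h2⟩
    · obtain ⟨σ, h0, h1, h3⟩ := hrun j
      rw [length_extract] at h1
      exact ⟨σ, h0, h1, h3, fun m hm1 hm2 hm => absurd (hvisit j m hm1 hm2 hm) hv⟩
  choose σ hσ0 hσ1 hσrun hσvis using hσ
  obtain ⟨ρ', hρ'⟩ := exists_glue b hb0 hb hbunb (fun j => ρ (a j)) σ hσ0 hσ1
  refine ⟨ρ', ⟨?_, fun n => ?_⟩, fun n => ?_⟩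
  · have := hρ' 0 0 (Nat.zero_le _)
    rw [hσ0, hb0, ha0, hρ0] at this
    exact this
  · obtain ⟨j, h1, h2⟩ := exists_block b hb0 hbunb n
    obtain ⟨k, rfl⟩ := Nat.exists_eq_add_of_le h1
    rw [add_assoc, hρ' j k (by omega), hρ' j (k + 1) (by omega)]
    exact (finRunOn_extract M β _ _ _).1 (hσrun j) k (by omega)
  · obtain ⟨N, hN⟩ := hbunb n
    obtain ⟨m, hm, hmF⟩ := hacc (a N)
    obtain ⟨j, h1, h2⟩ := exists_block a ha0 haunb m
    have hNj : N ≤ j := by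
      by_contra h
      have := ha (show j + 1 ≤ N by omega)
      omega
    obtain ⟨i, hi, hiF⟩ := hσvis j m h1 h2 hmF
    have := hb hNj
    refine ⟨b j + i, by omega, ?_⟩
    rw [hρ' j i hi]
    exact hiF

/-- the complement of `L(ℬ)` is the union of the sets
`U_{τ₀} · (U_τ)^ω` over all profile pairs `(τ₀, τ)` whose associated ω-language
is disjoint from `L(ℬ)`. -/
theorem complement_as_union {A : Type u} (M : SLA A) :
    {α : ℕ → A | α ∉ M.buchiLang} =
      ⋃ (τ₀ : Set (M.Q × M.Q) × Set (M.Q × M.Q)),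
        ⋃ (τ : Set (M.Q × M.Q) × Set (M.Q × M.Q)),
          ⋃ (_ : cat {u | M.tp u = τ₀} (omegaIter {u | M.tp u = τ}) ∩ M.buchiLang = ∅),
            cat {u | M.tp u = τ₀} (omegaIter {u | M.tp u = τ}) := by
  ext α
  simp only [Set.mem_ofPred_eq, Set.mem_iUnion]
  constructor
  · intro hα
    obtain ⟨τ₀, τ, h⟩ := exists_mem_cat M α
    refine ⟨τ₀, τ, Set.eq_empty_iff_forall_notMem.2 ?_, h⟩
    rintro β ⟨hβ, hβL⟩
    obtain ⟨a, ha0, ha, haunb, hatp⟩ := exists_cuts M α τ₀ τ h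
    obtain ⟨b, hb0, hb, hbunb, hbtp⟩ := exists_cuts M β τ₀ τ hβ
    exact hα (mem_buchiLang_of_blocks M β α b a hb0 hb hbunb ha0 ha haunb
      (fun j => (hbtp j).trans (hatp j).symm) hβL)
  · rintro ⟨τ₀, τ, hemp, h⟩ hL
    exact Set.eq_empty_iff_forall_notMem.1 hemp α ⟨h, hL⟩
end

section
/- Let 𝒜 be a strong set-labeled Büchi automaton over A. For every ω-word α : ℕ → A there exist strong transition profiles τ₀, τ and a strictly increasing sequence of natural numbers i₀ < i₁ < i₂ < ⋯ with i₀ ≥ 1 such that tp_α[0, i₀ − 1] = τ₀ and tp_α[i_j, i_{j+1} − 1] = τ for all j ≥ 0. -/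
/-!
The profiles take values in a finite type, so the claim is an instance of Ramsey's theorem for
pairs, in the weak form where only consecutive members of the sequence are compared. It is
obtained from a nonprincipal ultrafilter `U` on `ℕ`: for each `m` the colour of `{m, n}` is
some constant `c m` for `U`-almost all `n`, and `c` itself is constantly `t` on a set of `U`.
From any `m` with `c m = t`, `U`-almost every `n` is a legal next element of the sequence.
-/

universe u

/-- A strong set-labeled Büchi automaton over a (possibly infinite) alphabet `A`:
finitely many states, an initial state `q0`, a finite list of initial transitions
`(q0, φ, q)` (recorded as pairs `(φ, q)`, the source being `q0`) with `φ ⊆ A`,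
a finite list of transitions `(p, ψ, q)` with `ψ ⊆ A × A` constraining the pair
(previous letter, current letter), and a set of accepting states. -/
structure StrongSLA (A : Type u) where
  Q : Type
  fin : Finite Q
  q0 : Q
  Δ0 : List (Set A × Q)
  Δ : List (Q × Set (A × A) × Q)
  F : Set Q

namespace StrongSLA

variable {A : Type u}

/-- A run of `M` on the ω-word `α`. -/
def InfRun (M : StrongSLA A) (α : ℕ → A) (ρ : ℕ → M.Q) : Prop :=
  ρ 0 = M.q0 ∧ (∃ φ, (φ, ρ 1) ∈ M.Δ0 ∧ α 0 ∈ φ) ∧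
    ∀ i, 1 ≤ i → ∃ ψ, (ρ i, ψ, ρ (i + 1)) ∈ M.Δ ∧ (α (i - 1), α i) ∈ ψ

/-- The ω-language accepted by `M` with the Büchi condition. -/
def lang (M : StrongSLA A) : Set (ℕ → A) :=
  {α | ∃ ρ, M.InfRun α ρ ∧ ∀ n, ∃ m, n ≤ m ∧ ρ m ∈ M.F}

/-- `ρ` is a run of `M` from `p` to `q` on the segment `α[i, j]`:
states `ρ(i), …, ρ(j+1)`, each step `s` (for `i ≤ s ≤ j`) uses a transition
constrained by the pair `(α(s−1), α(s))`; for `s = 0` an initial transition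
is used instead (so necessarily `p = q0` when `i = 0`). -/
def SegRun (M : StrongSLA A) (α : ℕ → A) (i j : ℕ) (p q : M.Q) (ρ : ℕ → M.Q) : Prop :=
  ρ i = p ∧ ρ (j + 1) = q ∧ (i = 0 → p = M.q0) ∧
    ∀ s, i ≤ s → s ≤ j →
      if s = 0 then ∃ φ, (φ, ρ 1) ∈ M.Δ0 ∧ α 0 ∈ φ
      else ∃ ψ, (ρ s, ψ, ρ (s + 1)) ∈ M.Δ ∧ (α (s - 1), α s) ∈ ψ

/-- The strong transition profile `tp_α[i, j]`: the pair of sets of state pairs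
`(p, q)` admitting a run on the segment `α[i, j]`, respectively admitting such a
run that visits an accepting state. -/
def stp (M : StrongSLA A) (α : ℕ → A) (i j : ℕ) :
    Set (M.Q × M.Q) × Set (M.Q × M.Q) :=
  ({pq | ∃ ρ, M.SegRun α i j pq.1 pq.2 ρ},
   {pq | ∃ ρ, M.SegRun α i j pq.1 pq.2 ρ ∧ ∃ s, i ≤ s ∧ s ≤ j + 1 ∧ ρ s ∈ M.F})

/-- The set `W(τ₀, τ)` of ω-words admitting a factorization whose first segment
has strong profile `τ₀` and all further segments have strong profile `τ`. -/
def W (M : StrongSLA A) (τ₀ τ : Set (M.Q × M.Q) × Set (M.Q × M.Q)) : Set (ℕ → A) :=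
  {α | ∃ ι : ℕ → ℕ, StrictMono ι ∧ 1 ≤ ι 0 ∧ M.stp α 0 (ι 0 - 1) = τ₀ ∧
    ∀ j, M.stp α (ι j) (ι (j + 1) - 1) = τ}

end StrongSLA

/-- An ω-language is recognized by a strong set-labeled Büchi automaton over `A`. -/
def StrongBuchiRecognizable (A : Type u) (L : Set (ℕ → A)) : Prop :=
  ∃ M : StrongSLA A, M.lang = L

/-- A finitely valued function is constant on a set of the ultrafilter. -/
lemma eventually_const_of_finite {κ : Type*} [Finite κ] (U : Ultrafilter ℕ) (g : ℕ → κ) :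
    ∃ c, ∀ᶠ n in (U : Filter ℕ), g n = c := by
  obtain ⟨c, hc⟩ := (U.map g).eq_pure_of_finite
  refine ⟨c, ?_⟩
  have h : ({c} : Set κ) ∈ U.map g := by
    rw [hc]
    exact Set.mem_singleton c
  exact Ultrafilter.mem_map.mp h

/-- Ramsey's theorem for pairs of natural numbers, for consecutive pairs of the sequence only. -/
lemma exists_strictMono_consecutive_color {κ : Type*} [Finite κ] (f : ℕ → ℕ → κ) :
    ∃ t : κ, ∃ ι : ℕ → ℕ, StrictMono ι ∧ 1 ≤ ι 0 ∧ ∀ j, f (ι j) (ι (j + 1)) = t := by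
  let U : Ultrafilter ℕ := Filter.hyperfilter ℕ
  have hgt : ∀ m : ℕ, ∀ᶠ n in (U : Filter ℕ), m < n := fun m =>
    Nat.hyperfilter_le_atTop (Filter.eventually_gt_atTop m)
  choose c hc using fun m => eventually_const_of_finite U (f m)
  obtain ⟨t, ht⟩ := eventually_const_of_finite U c
  have step : ∀ m : {m // c m = t}, ∃ n : {n // c n = t}, m.1 < n.1 ∧ f m.1 n.1 = t := by
    rintro ⟨m, hm⟩
    obtain ⟨n, h₁, h₂, h₃⟩ := (ht.and ((hgt m).and (hc m))).exists
    exact ⟨⟨n, h₁⟩, h₂, h₃.trans hm⟩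
  choose next hlt hcol using step
  obtain ⟨m₀, h₀, hpos⟩ := (ht.and (hgt 0)).exists
  exact ⟨t, fun j => (next^[j] ⟨m₀, h₀⟩).1,
    strictMono_nat_of_lt_succ fun j => by
      rw [Function.iterate_succ_apply']
      exact hlt _,
    hpos, fun j => by
      beta_reduce
      rw [Function.iterate_succ_apply']
      exact hcol _⟩

/-- Ramsey factorization for strong Büchi automata: every ω-word
admits a factorization with `i₀ ≥ 1` whose first segment has some strong profile
`τ₀` and whose further segments all share one strong profile `τ`. -/
theorem strong_ramsey_factorization {A : Type u} (M : StrongSLA A) (α : ℕ → A) :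
    ∃ τ₀ τ : Set (M.Q × M.Q) × Set (M.Q × M.Q), ∃ ι : ℕ → ℕ,
      StrictMono ι ∧ 1 ≤ ι 0 ∧
      M.stp α 0 (ι 0 - 1) = τ₀ ∧
      ∀ j, M.stp α (ι j) (ι (j + 1) - 1) = τ := by 
  have := M.fin
  obtain ⟨τ, ι, hmono, hpos, hτ⟩ :=
    exists_strictMono_consecutive_color fun i k => M.stp α i (k - 1)
  exact ⟨_, τ, ι, hmono, hpos, rfl, hτ⟩
end
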